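/- arXiv:2512.00576 — 2 statements merged into one kernel-verified Lean document; each statement's English description precedes it below -/
import Mathlib

section
/- Let m, s, t be natural numbers and z ∈ ℂ. Then (1/(π·m!)) · ∫_ℂ w^s · conj(w)^t · K_m(z, w) · |w|^{2m} · e^{-|w|²} dA(w) equals ((s+m)!/(s+m−t)!) · z^{s−t} if t ≤ s, and equals 0 if s < t. -/
open MeasureTheory Complex ComplexOrder

/-- Weight function: `|z|^{2m} e^{-|z|^2}` as a complex number. -/
noncomputable def fsWt (m : ℕ) (z : ℂ) : ℂ :=
  ((‖z‖ : ℝ) : ℂ) ^ (2 * m) * ((Real.exp (-‖z‖ ^ 2) : ℝ) : ℂ)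

/-- Fock–Sobolev reproducing kernel `K_m(z,w)`. -/
noncomputable def fsKernel (m : ℕ) (z w : ℂ) : ℂ :=
  ∑' j : ℕ, ((m.factorial : ℂ) / ((j + m).factorial : ℂ)) * (z * starRingEnd ℂ w) ^ j

/-- Toeplitz operator with symbol `ψ` acting on `f`, evaluated at `z`. -/
noncomputable def fsToeplitz (m : ℕ) (ψ f : ℂ → ℂ) (z : ℂ) : ℂ :=
  (1 / ((Real.pi : ℂ) * (m.factorial : ℂ))) *
    ∫ w : ℂ, ψ w * f w * fsKernel m z w * fsWt m w

/-- Fock–Sobolev pairing `⟨g, h⟩`. -/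
noncomputable def fsPair (m : ℕ) (g h : ℂ → ℂ) : ℂ :=
  ∫ z : ℂ, g z * starRingEnd ℂ (h z) * fsWt m z

/-- `‖g‖² = ⟨g, g⟩`. -/
noncomputable def fsNormSq (m : ℕ) (g : ℂ → ℂ) : ℂ := fsPair m g g

/-!
Expanding the kernel in powers of `conj w` turns the integral into the series of the moments
`∫ w ^ s * conj w ^ (t + j) * |w| ^ (2m) * exp (-|w|²)`. Rotating the plane multiplies such a moment
by a phase, which kills it unless `s = t + j`, where it is the Gamma integral `π * (s + m)!`. Hence
at most the index `j = s - t` contributes.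

The exchange of sum and integral is dominated convergence: the coefficients `m! / (j + m)! * z ^ j`
are at most `|z| ^ j / j!` in modulus, and `exp (|z| |w|)` is integrable against the weight.
-/

open scoped Nat

theorem integral_eq_zero_of_comp_eq_smul {α 𝕜 E : Type*} [MeasurableSpace α] {μ : Measure α}
    [RCLike 𝕜] [NormedAddCommGroup E] [NormedSpace ℝ E] [NormedSpace 𝕜 E] [SMulCommClass ℝ 𝕜 E]
    {e : α ≃ᵐ α} (he : MeasurePreserving e μ μ) {f : α → E} {c : 𝕜} (hc : c ≠ 1)
    (hf : ∀ x, f (e x) = c • f x) : ∫ x, f x ∂μ = 0 := by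
  have h : c • ∫ x, f x ∂μ = ∫ x, f x ∂μ := by
    simpa only [hf, integral_smul] using he.integral_comp' f
  have h' : (c - 1) • ∫ x, f x ∂μ = 0 := by rw [sub_smul, one_smul, h, sub_self]
  exact (smul_eq_zero.mp h').resolve_left (sub_ne_zero.mpr hc)

theorem exists_circle_pow_mul_conj_pow_ne_one {s k : ℕ} (hsk : s ≠ k) :
    ∃ a : Circle, (a : ℂ) ^ s * starRingEnd ℂ (a : ℂ) ^ k ≠ 1 := by
  have hsk' : (s : ℂ) - k ≠ 0 := sub_ne_zero.mpr (by exact_mod_cast hsk)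
  refine ⟨Circle.exp (Real.pi / (s - k)), ?_⟩
  suffices h : (Circle.exp (Real.pi / (s - k)) : ℂ) ^ s *
      starRingEnd ℂ (Circle.exp (Real.pi / (s - k)) : ℂ) ^ k = -1 by
    rw [h]
    norm_num
  rw [Circle.coe_exp, ← exp_conj, ← exp_nat_mul, ← exp_nat_mul, ← exp_add, ← exp_pi_mul_I]
  congr 1
  simp only [map_mul, conj_ofReal, conj_I]
  push_cast
  field_simp
  ring

theorem integral_pow_mul_conj_pow_mul_radial_eq_zero (ρ : ℝ → ℂ) {s k : ℕ} (hsk : s ≠ k) :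
    ∫ w : ℂ, w ^ s * starRingEnd ℂ w ^ k * ρ ‖w‖ = 0 := by
  obtain ⟨a, ha⟩ := exists_circle_pow_mul_conj_pow_ne_one hsk
  refine integral_eq_zero_of_comp_eq_smul (e := (rotation a).toMeasurableEquiv)
    (rotation a).measurePreserving ha fun w => ?_
  rw [LinearIsometryEquiv.coe_toMeasurableEquiv, LinearIsometryEquiv.norm_map, rotation_apply,
    map_mul, smul_eq_mul]
  ring

theorem integral_norm_pow_mul_exp_neg_norm_sq (n : ℕ) :
    ∫ w : ℂ, ‖w‖ ^ (2 * n) * Real.exp (-‖w‖ ^ 2) = Real.pi * n ! := by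
  have h := Complex.integral_rpow_mul_exp_neg_rpow (p := 2) (q := (2 * n : ℕ)) one_le_two
    ((neg_lt_zero.mpr two_pos).trans_le (Nat.cast_nonneg _))
  have hΓ : (((2 * n : ℕ) : ℝ) + 2) / 2 = n + 1 := by
    push_cast
    ring
  rw [hΓ, Real.Gamma_nat_eq_factorial, mul_div_cancel_left₀ _ two_ne_zero] at h
  simpa only [Real.rpow_natCast, Real.rpow_ofNat] using h

section Gaussian

variable {V : Type*} [NormedAddCommGroup V] [InnerProductSpace ℝ V] [FiniteDimensional ℝ V]
  [MeasurableSpace V] [BorelSpace V]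

theorem integrable_exp_neg_mul_norm_sq {b : ℝ} (hb : 0 < b) :
    Integrable fun v : V => Real.exp (-b * ‖v‖ ^ 2) := by
  have h := (GaussianFourier.integrable_cexp_neg_mul_sq_norm_add (V := V) (b := b)
    (by simpa using hb) 0 0).norm
  simpa [norm_exp, ← ofReal_pow] using h

theorem integrable_exp_mul_norm_mul_norm_pow_mul_exp_neg (n : ℕ) (c : ℝ) {b : ℝ} (hb : 0 < b) :
    Integrable fun v : V => Real.exp (c * ‖v‖) * (‖v‖ ^ n * Real.exp (-b * ‖v‖ ^ 2)) := by
  refine ((integrable_exp_neg_mul_norm_sq (V := V) (half_pos hb)).const_mul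
    (n ! * Real.exp ((c + 1) ^ 2 / (2 * b)))).mono' (by fun_prop) (.of_forall fun v => ?_)
  have hpow : ‖v‖ ^ n ≤ n ! * Real.exp ‖v‖ := by
    rw [← div_le_iff₀' (by positivity)]
    exact Real.pow_div_factorial_le_exp _ (norm_nonneg v) n
  have hsq : (c + 1) * ‖v‖ - b * ‖v‖ ^ 2 ≤ (c + 1) ^ 2 / (2 * b) - b / 2 * ‖v‖ ^ 2 := by
    have h : (c + 1) ^ 2 / (2 * b) - b / 2 * ‖v‖ ^ 2 - ((c + 1) * ‖v‖ - b * ‖v‖ ^ 2) =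
        (c + 1 - b * ‖v‖) ^ 2 / (2 * b) := by
      field_simp
      ring
    rw [← sub_nonneg, h]
    positivity
  rw [Real.norm_of_nonneg (by positivity)]
  calc Real.exp (c * ‖v‖) * (‖v‖ ^ n * Real.exp (-b * ‖v‖ ^ 2))
      ≤ Real.exp (c * ‖v‖) * (n ! * Real.exp ‖v‖ * Real.exp (-b * ‖v‖ ^ 2)) := by gcongr
    _ = n ! * Real.exp ((c + 1) * ‖v‖ - b * ‖v‖ ^ 2) := by
      rw [show (c + 1) * ‖v‖ - b * ‖v‖ ^ 2 = c * ‖v‖ + ‖v‖ + -b * ‖v‖ ^ 2 by ring,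
        Real.exp_add, Real.exp_add]
      ring
    _ ≤ n ! * Real.exp ((c + 1) ^ 2 / (2 * b) - b / 2 * ‖v‖ ^ 2) := by gcongr
    _ = n ! * Real.exp ((c + 1) ^ 2 / (2 * b)) * Real.exp (-(b / 2) * ‖v‖ ^ 2) := by
      rw [mul_assoc, ← Real.exp_add]
      ring_nf

end Gaussian

theorem hasSum_pow_div_factorial_exp (x : ℝ) :
    HasSum (fun j : ℕ => x ^ j / j !) (Real.exp x) := by
  rw [Real.exp_eq_exp_ℝ]
  exact NormedSpace.expSeries_div_hasSum_exp x

theorem hasSum_integral_tsum_mul_pow_mul {α 𝕜 : Type*} [MeasurableSpace α] {μ : Measure α}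
    [RCLike 𝕜] {a : ℕ → 𝕜} {r : ℝ} (ha : ∀ j, ‖a j‖ ≤ r ^ j / j !) {f g : α → 𝕜}
    (hf : AEStronglyMeasurable f μ) (hg : AEStronglyMeasurable g μ)
    (hfg : Integrable (fun x => Real.exp (r * ‖g x‖) * ‖f x‖) μ) :
    HasSum (fun j => a j * ∫ x, g x ^ j * f x ∂μ) (∫ x, (∑' j, a j * g x ^ j) * f x ∂μ) := by
  have hexp (x : α) : HasSum (fun j : ℕ => (r * ‖g x‖) ^ j / j ! * ‖f x‖)
      (Real.exp (r * ‖g x‖) * ‖f x‖) :=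
    (hasSum_pow_div_factorial_exp _).mul_right _
  have hbound (j : ℕ) (x : α) : ‖a j * g x ^ j‖ ≤ (r * ‖g x‖) ^ j / j ! := by
    rw [norm_mul, norm_pow, mul_pow, mul_div_right_comm]
    exact mul_le_mul_of_nonneg_right (ha j) (by positivity)
  simp only [← integral_const_mul, ← mul_assoc]
  refine hasSum_integral_of_dominated_convergence
    (fun j x => (r * ‖g x‖) ^ j / j ! * ‖f x‖) (fun j => ((hg.pow j).const_mul _).mul hf)
    (fun j => .of_forall fun x => ?_) (.of_forall fun x => (hexp x).summable)
    (by simpa only [fun x => (hexp x).tsum_eq] using hfg) (.of_forall fun x => ?_)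
  · rw [norm_mul]
    exact mul_le_mul_of_nonneg_right (hbound j x) (norm_nonneg _)
  · exact (Summable.of_norm_bounded (Real.summable_pow_div_factorial _)
      fun j => hbound j x).hasSum.mul_right _

theorem norm_factorial_div_factorial_mul_pow_le {𝕜 : Type*} [RCLike 𝕜] (m j : ℕ) (z : 𝕜) :
    ‖(m ! : 𝕜) / ((j + m)! : 𝕜) * z ^ j‖ ≤ ‖z‖ ^ j / j ! := by
  have h : (m ! : ℝ) / (j + m)! ≤ 1 / j ! := by
    rw [div_le_div_iff₀ (by positivity) (by positivity), one_mul, mul_comm]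
    exact_mod_cast Nat.le_of_dvd (Nat.factorial_pos _)
      (Nat.factorial_mul_factorial_dvd_factorial_add j m)
  rw [norm_mul, norm_div, RCLike.norm_natCast, RCLike.norm_natCast, norm_pow,
    div_eq_mul_one_div (‖z‖ ^ j), mul_comm]
  gcongr

theorem hasSum_integral_fsKernel_mul (m : ℕ) (z : ℂ) {μ : Measure ℂ} {f : ℂ → ℂ}
    (hf : AEStronglyMeasurable f μ)
    (hfint : Integrable (fun w => Real.exp (‖z‖ * ‖w‖) * ‖f w‖) μ) :
    HasSum (fun j : ℕ => (m ! : ℂ) / ((j + m)! : ℂ) * z ^ j * ∫ w, starRingEnd ℂ w ^ j * f w ∂μ)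
      (∫ w, fsKernel m z w * f w ∂μ) := by
  simpa only [fsKernel, mul_pow, ← mul_assoc] using
    hasSum_integral_tsum_mul_pow_mul (norm_factorial_div_factorial_mul_pow_le m · z) hf
      continuous_conj.aestronglyMeasurable (by simpa only [RCLike.norm_conj] using hfint)

theorem continuous_fsWt (m : ℕ) : Continuous (fsWt m) := by
  unfold fsWt
  fun_prop

theorem norm_fsWt (m : ℕ) (w : ℂ) : ‖fsWt m w‖ = ‖w‖ ^ (2 * m) * Real.exp (-‖w‖ ^ 2) := by
  rw [fsWt, ← ofReal_pow, ← ofReal_mul, norm_real, Real.norm_of_nonneg (by positivity)]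

theorem integral_pow_mul_conj_pow_mul_fsWt (m s k : ℕ) :
    ∫ w : ℂ, w ^ s * starRingEnd ℂ w ^ k * fsWt m w =
      if s = k then (Real.pi : ℂ) * ((s + m)! : ℂ) else 0 := by
  split_ifs with h
  · subst h
    have hnorm (w : ℂ) : w ^ s * starRingEnd ℂ w ^ s * fsWt m w =
        ((‖w‖ ^ (2 * (s + m)) * Real.exp (-‖w‖ ^ 2) : ℝ) : ℂ) := by
      rw [← mul_pow, mul_conj, normSq_eq_norm_sq, fsWt]
      push_cast
      ring
    simp only [hnorm]
    rw [integral_complex_ofReal, integral_norm_pow_mul_exp_neg_norm_sq, ofReal_mul, ofReal_natCast]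
  · exact integral_pow_mul_conj_pow_mul_radial_eq_zero
      (fun r => (r : ℂ) ^ (2 * m) * (Real.exp (-r ^ 2) : ℂ)) h

theorem hasSum_integral_pow_mul_conj_pow_mul_fsKernel (m s t : ℕ) (z : ℂ) :
    HasSum (fun j : ℕ => (m ! : ℂ) / ((j + m)! : ℂ) * z ^ j *
        if s = t + j then (Real.pi : ℂ) * ((s + m)! : ℂ) else 0)
      (∫ w : ℂ, w ^ s * starRingEnd ℂ w ^ t * fsKernel m z w * fsWt m w) := by
  have hcont : Continuous fun w : ℂ => w ^ s * starRingEnd ℂ w ^ t * fsWt m w := by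
    have := continuous_fsWt m
    fun_prop
  have hfint : Integrable fun w : ℂ => Real.exp (‖z‖ * ‖w‖) *
      ‖w ^ s * starRingEnd ℂ w ^ t * fsWt m w‖ := by
    simpa only [norm_mul, norm_pow, RCLike.norm_conj, norm_fsWt, pow_add, neg_one_mul, mul_assoc]
      using integrable_exp_mul_norm_mul_norm_pow_mul_exp_neg (V := ℂ) (s + t + 2 * m) ‖z‖ one_pos
  have hmoment (j : ℕ) :
      ∫ w : ℂ, starRingEnd ℂ w ^ j * (w ^ s * starRingEnd ℂ w ^ t * fsWt m w) =
        if s = t + j then (Real.pi : ℂ) * ((s + m)! : ℂ) else 0 := by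
    rw [← integral_pow_mul_conj_pow_mul_fsWt]
    congr 1 with w
    ring
  have hkernel (w : ℂ) : fsKernel m z w * (w ^ s * starRingEnd ℂ w ^ t * fsWt m w) =
      w ^ s * starRingEnd ℂ w ^ t * fsKernel m z w * fsWt m w := by ring
  simpa only [hmoment, hkernel] using
    hasSum_integral_fsKernel_mul m z hcont.aestronglyMeasurable hfint

theorem stmt1 (m s t : ℕ) (z : ℂ) :
    (1 / ((Real.pi : ℂ) * (m.factorial : ℂ))) *
        (∫ w : ℂ, w ^ s * (starRingEnd ℂ w) ^ t * fsKernel m z w * fsWt m w) =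
      if t ≤ s then (((s + m).factorial : ℂ) / ((s + m - t).factorial : ℂ)) * z ^ (s - t)
      else 0 := by
  rw [← (hasSum_integral_pow_mul_conj_pow_mul_fsKernel m s t z).tsum_eq]
  split_ifs with hts
  · have hπ : (Real.pi : ℂ) ≠ 0 := ofReal_ne_zero.mpr Real.pi_ne_zero
    have hm : (m ! : ℂ) ≠ 0 := Nat.cast_ne_zero.mpr m.factorial_ne_zero
    rw [tsum_eq_single (s - t) fun j hj => by rw [if_neg (by omega), mul_zero],
      if_pos (by omega), show s - t + m = s + m - t by omega]
    field_simp
  · have hne (j : ℕ) : s ≠ t + j := by omega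
    simp only [hne, if_false, mul_zero, tsum_zero]
end

section
/- Let m, p, n, s, t, k be natural numbers with n < p, s < t, k > 2·p and k > 2·t, let a, b ∈ ℂ, and let φ(z) = a·z^p·conj(z)^n + b·z^s·conj(z)^t. Then ⟨T_φ(T_φ (w ↦ w^k)), T_φ (w ↦ w^k)⟩ = 0 and ⟨T_{conj∘φ}(T_φ (w ↦ w^k)), T_{conj∘φ} (w ↦ w^k)⟩ = 0; in particular the quasinormality test ⟨T_φ(T_φ (w ↦ w^k)), T_φ (w ↦ w^k)⟩ = ⟨T_{conj∘φ}(T_φ (w ↦ w^k)), T_{conj∘φ} (w ↦ w^k)⟩ holds at every such monomial. -/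
/-!
Put `N = (p - n) - (s - t)` and choose `ω` on the unit circle with `ω ^ N = 1` and
`α := ω ^ (p - n) ≠ 1`. Then `ω ^ (p - n) = ω ^ (s - t)`, so both terms of `φ` are multiplied by the
same factor `α` under the rotation `z ↦ ω z`. Lebesgue measure, the weight and the kernel are
rotation invariant, so applying a Toeplitz operator multiplies the rotation eigenvalues of symbol
and argument, and functions with distinct eigenvalues are orthogonal. In `⟨T_ψ T_φ f, T_ψ f⟩` the
two eigenvalues differ by the factor `α ≠ 1`, whether `ψ` is `φ` or `conj ∘ φ`. The integrals only
undergo rotations of the variable, which are valid whether or not they converge.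
-/

open MeasureTheory Complex ComplexOrder

/-- `f` is an eigenfunction of the rotation operator `f ↦ f (ω * ·)` with eigenvalue `α` (the zero
function is allowed). These eigenspaces grade the symbols and functions on which the Toeplitz
operators act. -/
def IsRotationEigenfunction (ω α : Circle) (f : ℂ → ℂ) : Prop :=
  ∀ z, f (ω * z) = α * f z

namespace IsRotationEigenfunction

variable {ω α β : Circle} {f g : ℂ → ℂ}

lemma add (hf : IsRotationEigenfunction ω α f) (hg : IsRotationEigenfunction ω α g) :
    IsRotationEigenfunction ω α fun z => f z + g z := fun z => by
  simp only [hf z, hg z, mul_add]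

lemma const_mul (c : ℂ) (hf : IsRotationEigenfunction ω α f) :
    IsRotationEigenfunction ω α fun z => c * f z := fun z => by
  simp only [hf z, mul_left_comm]

lemma mul (hf : IsRotationEigenfunction ω α f) (hg : IsRotationEigenfunction ω β g) :
    IsRotationEigenfunction ω (α * β) fun z => f z * g z := fun z => by
  simp only [hf z, hg z, Circle.coe_mul, mul_mul_mul_comm]

lemma conj (hf : IsRotationEigenfunction ω α f) :
    IsRotationEigenfunction ω α⁻¹ fun z => starRingEnd ℂ (f z) := fun z => by
  simp only [hf z, map_mul, Circle.coe_inv_eq_conj]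

end IsRotationEigenfunction

lemma isRotationEigenfunction_pow (ω : Circle) (k : ℕ) :
    IsRotationEigenfunction ω (ω ^ k) fun z => z ^ k := fun z => by
  simp only [mul_pow, Circle.coe_pow]

lemma isRotationEigenfunction_monomial (ω : Circle) (c : ℂ) (p n : ℕ) :
    IsRotationEigenfunction ω (ω ^ (p - n : ℤ)) fun z => c * z ^ p * starRingEnd ℂ z ^ n := by
  have h := ((isRotationEigenfunction_pow ω p).mul
    (isRotationEigenfunction_pow ω n).conj).const_mul c
  simpa only [map_pow, mul_assoc, zpow_sub, zpow_natCast] using h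

lemma integral_circle_mul {E : Type*} [NormedAddCommGroup E] [NormedSpace ℝ E]
    (ω : Circle) (f : ℂ → E) : ∫ z : ℂ, f (ω * z) = ∫ z : ℂ, f z :=
  (rotation ω).measurePreserving.integral_comp
    (rotation ω).toHomeomorph.measurableEmbedding f

lemma fsWt_circle_mul (m : ℕ) (ω : Circle) (z : ℂ) : fsWt m (ω * z) = fsWt m z := by
  simp only [fsWt, norm_mul, Circle.norm_coe, one_mul]

lemma fsKernel_circle_mul (m : ℕ) (ω : Circle) (z w : ℂ) :
    fsKernel m (ω * z) (ω * w) = fsKernel m z w := by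
  have hzw : ω * z * starRingEnd ℂ (ω * w) = z * starRingEnd ℂ w := by
    rw [map_mul, mul_mul_mul_comm, ← Circle.coe_inv_eq_conj, ← Circle.coe_mul, mul_inv_cancel,
      Circle.coe_one, one_mul]
  simp only [fsKernel, hzw]

section Eigenfunctions

variable {ω α β γ : Circle} {φ ψ f g h : ℂ → ℂ}

lemma IsRotationEigenfunction.fsToeplitz (m : ℕ) (hψ : IsRotationEigenfunction ω α ψ)
    (hf : IsRotationEigenfunction ω β f) :
    IsRotationEigenfunction ω (α * β) (fsToeplitz m ψ f) := fun z => by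
  have hint : ∫ w : ℂ, ψ w * f w * fsKernel m (ω * z) w * fsWt m w =
      (α * β : Circle) * ∫ w : ℂ, ψ w * f w * fsKernel m z w * fsWt m w := by
    rw [← integral_circle_mul ω, ← integral_const_mul]
    refine integral_congr_ae (.of_forall fun w => ?_)
    simp only [hψ.mul hf w, fsKernel_circle_mul, fsWt_circle_mul, mul_assoc]
  simp only [_root_.fsToeplitz, hint, mul_left_comm]

lemma fsPair_eq_mul_fsPair (m : ℕ) (hg : IsRotationEigenfunction ω α g)
    (hh : IsRotationEigenfunction ω β h) :
    fsPair m g h = (α * β⁻¹ : Circle) * fsPair m g h :=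
  calc fsPair m g h
    _ = ∫ z : ℂ, g (ω * z) * starRingEnd ℂ (h (ω * z)) * fsWt m (ω * z) :=
      (integral_circle_mul ω _).symm
    _ = ∫ z : ℂ, (α * β⁻¹ : Circle) * (g z * starRingEnd ℂ (h z) * fsWt m z) := by
      simp only [hg.mul hh.conj _, fsWt_circle_mul, mul_assoc]
    _ = (α * β⁻¹ : Circle) * fsPair m g h := integral_const_mul _ _

lemma fsPair_eq_zero_of_ne (m : ℕ) (hg : IsRotationEigenfunction ω α g)
    (hh : IsRotationEigenfunction ω β h) (hαβ : α ≠ β) : fsPair m g h = 0 := by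
  by_contra hne
  have hone : ((α * β⁻¹ : Circle) : ℂ) = 1 :=
    (mul_eq_right₀ hne).mp (fsPair_eq_mul_fsPair m hg hh).symm
  exact hαβ (mul_inv_eq_one.mp (Circle.coe_eq_one.mp hone))

lemma fsPair_fsToeplitz_fsToeplitz_eq_zero (m : ℕ) (hφ : IsRotationEigenfunction ω α φ)
    (hψ : IsRotationEigenfunction ω γ ψ) (hf : IsRotationEigenfunction ω β f) (hα : α ≠ 1) :
    fsPair m (fsToeplitz m ψ (fsToeplitz m φ f)) (fsToeplitz m ψ f) = 0 := by
  refine fsPair_eq_zero_of_ne m (hψ.fsToeplitz m (hφ.fsToeplitz m hf)) (hψ.fsToeplitz m hf) ?_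
  rwa [Ne, mul_right_inj, mul_eq_right]

end Eigenfunctions

lemma exists_circle_zpow_eq_one_and_zpow_ne_one {N d : ℤ} (hd : ¬ N ∣ d) :
    ∃ ω : Circle, ω ^ N = 1 ∧ ω ^ d ≠ 1 := by
  rcases eq_or_ne N 0 with rfl | hN
  · have hd₀ : (d : ℝ) ≠ 0 := Int.cast_ne_zero.mpr fun h => hd (zero_dvd_iff.mpr h)
    refine ⟨Circle.exp (Real.pi / d), zpow_zero _, ?_⟩
    rw [← Circle.exp_intCast_mul, mul_div_cancel₀ _ hd₀]
    exact Circle.exp_pi_ne_one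
  · have hN₀ : (N : ℝ) ≠ 0 := Int.cast_ne_zero.mpr hN
    refine ⟨Circle.exp (2 * Real.pi / N), ?_, fun h => hd ?_⟩
    · rw [← Circle.exp_intCast_mul, mul_div_cancel₀ _ hN₀, Circle.exp_two_pi]
    · rw [← Circle.exp_intCast_mul, Circle.exp_eq_one] at h
      obtain ⟨j, hj⟩ := h
      have hdj : (d : ℝ) = N * j := by
        field_simp at hj
        exact hj
      exact ⟨j, mod_cast hdj⟩

lemma not_sub_dvd_of_pos_of_neg {d e : ℤ} (hd : 0 < d) (he : e < 0) : ¬ d - e ∣ d := fun h => by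
  have hle : d - e ≤ d := Int.le_of_dvd hd h
  lia

theorem stmt16_general (m p n s t k : ℕ) (hdvd : ¬ ((p - n) - (s - t) : ℤ) ∣ p - n) (a b : ℂ)
    (φ : ℂ → ℂ)
    (hφ : φ = fun z => a * z ^ p * starRingEnd ℂ z ^ n + b * z ^ s * starRingEnd ℂ z ^ t) :
    fsPair m (fsToeplitz m φ (fsToeplitz m φ (fun w => w ^ k)))
        (fsToeplitz m φ (fun w => w ^ k)) = 0 ∧
    fsPair m (fsToeplitz m (fun w => starRingEnd ℂ (φ w)) (fsToeplitz m φ (fun w => w ^ k)))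
        (fsToeplitz m (fun w => starRingEnd ℂ (φ w)) (fun w => w ^ k)) = 0 := by
  obtain ⟨ω, hω, hα⟩ := exists_circle_zpow_eq_one_and_zpow_ne_one hdvd
  have hst : ω ^ (s - t : ℤ) = ω ^ (p - n : ℤ) := by
    rw [zpow_sub, mul_inv_eq_one] at hω
    exact hω.symm
  have hφω : IsRotationEigenfunction ω (ω ^ (p - n : ℤ)) φ := by
    rw [hφ]
    exact (isRotationEigenfunction_monomial ω a p n).add
      (hst ▸ isRotationEigenfunction_monomial ω b s t)
  have hk := isRotationEigenfunction_pow ω k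
  exact ⟨fsPair_fsToeplitz_fsToeplitz_eq_zero m hφω hφω hk hα,
    fsPair_fsToeplitz_fsToeplitz_eq_zero m hφω hφω.conj hk hα⟩

theorem stmt16 (m p n s t k : ℕ) (hn : n < p) (hs : s < t)
    (hk1 : k > 2 * p) (hk2 : k > 2 * t) (a b : ℂ) (φ : ℂ → ℂ) (hφ : φ = fun z => a * z ^ p * (starRingEnd ℂ z) ^ n + b * z ^ s * (starRingEnd ℂ z) ^ t) :
    fsPair m (fsToeplitz m φ (fsToeplitz m φ (fun w => w ^ k)))
        (fsToeplitz m φ (fun w => w ^ k)) = 0 ∧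
    fsPair m (fsToeplitz m (fun w => starRingEnd ℂ (φ w)) (fsToeplitz m φ (fun w => w ^ k)))
        (fsToeplitz m (fun w => starRingEnd ℂ (φ w)) (fun w => w ^ k)) = 0 ∧
    fsPair m (fsToeplitz m φ (fsToeplitz m φ (fun w => w ^ k)))
        (fsToeplitz m φ (fun w => w ^ k)) =
      fsPair m (fsToeplitz m (fun w => starRingEnd ℂ (φ w)) (fsToeplitz m φ (fun w => w ^ k)))
        (fsToeplitz m (fun w => starRingEnd ℂ (φ w)) (fun w => w ^ k)) := by
  have ⟨hT, hTconj⟩ := stmt16_general m p n s t k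
    (not_sub_dvd_of_pos_of_neg (by lia) (by lia)) a b φ hφ
  exact ⟨hT, hTconj, hT.trans hTconj.symm⟩
end
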